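/- Let q ≥ 1 and let D be a symmetric n×n Kalmanson matrix with n ≥ 2q+1. Then the identity permutation ⟨1,2,…,n⟩ minimizes the q-stripe TSP objective: F_q(id) ≤ F_q(π) for every permutation π of {1,…,n}. -/

import Mathlib

/-!
Off the diagonal, a Kalmanson matrix is a sum of vertex weights and of nonpositive multiples of the
indicators of both endpoints lying in `[a, b]`; the multiples are mixed second differences of the
matrix. The vertex weights contribute the same amount to every tour, so it suffices that, among the
sets `S` of a given size, intervals contain the most pairs at cyclic distance at most `q`.

For every shift `p` the number of `x ∈ S` with `x + p ∉ S` is the same for `S` and `Sᶜ`, so the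
problem for `S` is equivalent to that for `Sᶜ`. If `S` is the smaller of the two, choose `T ⊆ S` of
size `min q #S` and contract the cycle to `Sᶜ ∪ T`. Distances within `Sᶜ` only shrink, so no pair is
lost, while the complement of `Sᶜ` in the contracted cycle is `T`, for which the trivial bound by
the number of all its pairs is good enough: after taking complements again, it matches what
intervals achieve.
-/

/-- Cyclic shift: the city `p` steps after position `i` in the circular order on `Fin n`. -/
def finShift {n : ℕ} (i : Fin n) (p : ℕ) : Fin n :=
  ⟨(i.val + p) % n, Nat.mod_lt _ i.pos⟩

/-- The `q`-stripe TSP objective: `∑_{p=1}^{q} ∑_{i=1}^{n} d(π(i), π(i+p))`,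
indices taken cyclically modulo `n`. -/
noncomputable def stripeObj (q : ℕ) {n : ℕ} (D : Fin n → Fin n → ℝ)
    (π : Equiv.Perm (Fin n)) : ℝ :=
  ∑ p ∈ Finset.Icc 1 q, ∑ i : Fin n, D (π i) (π (finShift i p))

/-- `D` is a Kalmanson matrix: `d(i,j) + d(k,ℓ) ≤ d(i,k) + d(j,ℓ)` and
`d(i,ℓ) + d(j,k) ≤ d(i,k) + d(j,ℓ)` for all `i < j < k < ℓ`. -/
def KalmansonMat {n : ℕ} (D : Fin n → Fin n → ℝ) : Prop :=
  ∀ i j k l : Fin n, i < j → j < k → k < l →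
    D i j + D k l ≤ D i k + D j l ∧ D i l + D j k ≤ D i k + D j l

open Finset

section ClosePairs

variable {n q : ℕ}

/-- The ordered pairs of distinct elements of `S` whose second entry is at most `q` steps ahead of
the first on the cycle `Fin n`; cyclic subtraction makes `z.2 - z.1` the forward distance. -/
def closePairs (q : ℕ) (S : Finset (Fin n)) : Finset (Fin n × Fin n) :=
  {z ∈ S.offDiag | ((z.2 - z.1 : Fin n) : ℕ) ≤ q}

lemma mem_closePairs {S : Finset (Fin n)} {x y : Fin n} :
    (x, y) ∈ closePairs q S ↔ (x ∈ S ∧ y ∈ S ∧ x ≠ y) ∧ ((y - x : Fin n) : ℕ) ≤ q := by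
  simp [closePairs]

lemma closePairs_eq_filter_univ (S : Finset (Fin n)) :
    closePairs q S = {z ∈ closePairs q univ | z.1 ∈ S ∧ z.2 ∈ S} := by
  ext ⟨x, y⟩
  simp only [mem_filter, mem_closePairs, mem_univ, true_and]
  tauto

lemma val_sub_eq_ite (x y : Fin n) :
    ((y - x : Fin n) : ℕ) = if x ≤ y then (y : ℕ) - x else n + y - x := by
  split_ifs with h
  · exact Fin.coe_sub_iff_le.mpr h
  · exact Fin.coe_sub_iff_lt.mpr (not_le.mp h)

lemma val_finShift {p : ℕ} (hp : p < n) (x : Fin n) :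
    (finShift x p : ℕ) = if (x : ℕ) + p < n then (x : ℕ) + p else (x : ℕ) + p - n := by
  split_ifs with h
  · exact Nat.mod_eq_of_lt h
  · exact (Nat.mod_eq_sub_mod (not_lt.mp h)).trans (Nat.mod_eq_of_lt (by lia))

lemma finShift_eq_iff {p : ℕ} (hp : p < n) {x y : Fin n} :
    finShift x p = y ↔ ((y - x : Fin n) : ℕ) = p := by
  rw [Fin.ext_iff, val_finShift hp, val_sub_eq_ite]
  grind

lemma finShift_bijective (p : ℕ) : Function.Bijective fun x : Fin n ↦ finShift x p := by
  refine Finite.injective_iff_bijective.mp fun x y h ↦ ?_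
  have hmod : x ≡ y [MOD n] := Nat.ModEq.add_right_cancel' p (Fin.ext_iff.mp h)
  exact Fin.ext (hmod.eq_of_lt_of_lt x.isLt y.isLt)

lemma sum_closePairs_univ {M : Type*} [AddCommMonoid M] (hq : q < n) (f : Fin n → Fin n → M) :
    ∑ z ∈ closePairs q univ, f z.1 z.2 = ∑ p ∈ Icc 1 q, ∑ x, f x (finShift x p) := by
  rw [← sum_product']
  refine sum_nbij' (fun z ↦ (((z.2 - z.1 : Fin n) : ℕ), z.1)) (fun z ↦ (z.2, finShift z.2 z.1))
    ?_ ?_ ?_ ?_ ?_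
  · rintro ⟨x, y⟩ hxy
    obtain ⟨⟨-, -, hne⟩, hle⟩ := mem_closePairs.mp hxy
    have : NeZero n := ⟨x.pos.ne'⟩
    have hpos : ((y - x : Fin n) : ℕ) ≠ 0 := by
      rw [Fin.val_ne_zero_iff]
      exact sub_ne_zero.mpr hne.symm
    simp only [mem_product, mem_Icc, mem_univ, and_true]
    lia
  · rintro ⟨p, x⟩ hp
    obtain ⟨hp1, hpq⟩ := mem_Icc.mp (mem_product.mp hp).1
    have hdist : ((finShift x p - x : Fin n) : ℕ) = p :=
      (finShift_eq_iff (hpq.trans_lt hq)).mp rfl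
    have hne : x ≠ finShift x p := fun h ↦ by
      rw [← h, val_sub_eq_ite, if_pos le_rfl, Nat.sub_self] at hdist
      lia
    exact mem_closePairs.mpr ⟨⟨mem_univ _, mem_univ _, hne⟩, hdist.trans_le hpq⟩
  · rintro ⟨x, y⟩ -
    exact Prod.ext rfl ((finShift_eq_iff (Fin.is_lt _)).mpr rfl)
  · rintro ⟨p, x⟩ hp
    have hpq := (mem_Icc.mp (mem_product.mp hp).1).2
    exact Prod.ext ((finShift_eq_iff (hpq.trans_lt hq)).mp rfl) rfl
  · rintro ⟨x, y⟩ -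
    exact congrArg (f x) ((finShift_eq_iff (Fin.is_lt _)).mpr rfl).symm

lemma card_closePairs (hq : q < n) (S : Finset (Fin n)) :
    #(closePairs q S) = ∑ p ∈ Icc 1 q, #{x ∈ S | finShift x p ∈ S} := by
  rw [closePairs_eq_filter_univ, card_filter,
    sum_closePairs_univ hq fun x y ↦ if x ∈ S ∧ y ∈ S then 1 else 0]
  simp only [← card_filter, ← filter_filter, filter_univ_mem]

end ClosePairs

section Isoperimetry

variable {n q : ℕ}

lemma card_filter_mem_add_card_compl {α : Type*} [Fintype α] [DecidableEq α] {σ : α → α}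
    (hσ : σ.Bijective) (S : Finset α) :
    #{x ∈ S | σ x ∈ S} + #Sᶜ = #{x ∈ Sᶜ | σ x ∈ Sᶜ} + #S := by
  have preimage_card : #{x | σ x ∈ S} = #S := card_bijective σ hσ (by simp)
  have hS := card_filter_add_card_filter_not (s := {x | σ x ∈ S}) (· ∈ S)
  have hSc := card_filter_add_card_filter_not (s := Sᶜ) (σ · ∈ S)
  have inside : ({x ∈ {x | σ x ∈ S} | x ∈ S} : Finset α) = {x ∈ S | σ x ∈ S} := by
    ext; simp [and_comm]
  have outside : ({x ∈ {x | σ x ∈ S} | x ∉ S} : Finset α) = {x ∈ Sᶜ | σ x ∈ S} := by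
    ext; simp [and_comm]
  rw [inside, outside, preimage_card] at hS
  simp only [mem_compl]
  lia

lemma card_closePairs_add_mul_card_compl (hq : q < n) (S : Finset (Fin n)) :
    #(closePairs q S) + q * #Sᶜ = #(closePairs q Sᶜ) + q * #S := by
  have per_shift : ∀ p ∈ Icc 1 q, #{x ∈ S | finShift x p ∈ S} + #Sᶜ
      = #{x ∈ Sᶜ | finShift x p ∈ Sᶜ} + #S := fun p _ ↦
    card_filter_mem_add_card_compl (finShift_bijective p) S
  simpa only [sum_add_distrib, ← card_closePairs hq, sum_const, Nat.card_Icc, smul_eq_mul,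
    add_tsub_cancel_right] using sum_congr rfl per_shift

lemma card_closePairs_le_choose_two (hn : 2 * q < n) (S : Finset (Fin n)) :
    #(closePairs q S) ≤ (#S).choose 2 := by
  have hswap : #(closePairs q S) ≤ #{z ∈ S.offDiag | ¬((z.2 - z.1 : Fin n) : ℕ) ≤ q} := by
    refine card_le_card_of_injOn Prod.swap ?_ Prod.swap_injective.injOn
    rintro ⟨x, y⟩ hxy
    rw [mem_coe, mem_closePairs, val_sub_eq_ite] at hxy
    simp only [Prod.swap_prod_mk, coe_filter, mem_offDiag, Set.mem_ofPred_eq, val_sub_eq_ite]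
    grind
  have hsum := card_filter_add_card_filter_not (s := S.offDiag)
    (fun z ↦ ((z.2 - z.1 : Fin n) : ℕ) ≤ q)
  rw [Nat.choose_two_right, Nat.le_div_iff_mul_le two_pos, Nat.mul_sub_one, ← offDiag_card]
  rw [closePairs] at hswap ⊢
  lia

lemma sum_min_add_choose_two {k : ℕ} (hk : k ≤ q) :
    ∑ p ∈ Icc 1 q, min p k + k.choose 2 = q * k := by
  induction k with
  | zero => simp
  | succ k ih =>
    have hstep : ∑ p ∈ Icc 1 q, min p (k + 1) = ∑ p ∈ Icc 1 q, min p k + (q - k) := by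
      have hcard : #{p ∈ Icc 1 q | k < p} = q - k := by
        rw [← Nat.card_Ioc]; congr 1; grind
      rw [← hcard, card_filter, ← sum_add_distrib]
      exact sum_congr rfl fun p _ ↦ by grind
    rw [hstep, Nat.choose_succ_succ' k 1, Nat.choose_one_right]
    grind

lemma val_sub_le_val_sub_orderEmbedding {m : ℕ} (φ : Fin m ↪o Fin n) (x y : Fin m) :
    ((y - x : Fin m) : ℕ) ≤ ((φ y - φ x : Fin n) : ℕ) := by
  have card_le : ∀ {s : Finset (Fin m)} {t : Finset (Fin n)}, (∀ i ∈ s, φ i ∈ t) → #s ≤ #t :=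
    fun h ↦ card_le_card_of_injOn φ h φ.injective.injOn
  have between : #(Icc x y) ≤ #(Icc (φ x) (φ y)) := card_le (by simp)
  have below : #(Iic y) ≤ #(Iic (φ y)) := card_le (by simp)
  have above : #(Ioi x) ≤ #(Ioi (φ x)) := card_le (by simp)
  simp only [Fin.card_Icc, Fin.card_Iic, Fin.card_Ioi] at between below above
  simp only [val_sub_eq_ite, φ.le_iff_le]
  grind

lemma card_closePairs_map_le {m : ℕ} (φ : Fin m ↪o Fin n) (S : Finset (Fin m)) :
    #(closePairs q (S.map φ.toEmbedding)) ≤ #(closePairs q S) := by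
  have hsub : closePairs q (S.map φ.toEmbedding) ⊆ (closePairs q S).image (Prod.map φ φ) := by
    rintro ⟨x, y⟩ hxy
    obtain ⟨⟨hx, hy, hne⟩, hle⟩ := mem_closePairs.mp hxy
    obtain ⟨x', hx', rfl⟩ := mem_map.mp hx
    obtain ⟨y', hy', rfl⟩ := mem_map.mp hy
    refine mem_image.mpr ⟨(x', y'), mem_closePairs.mpr ⟨⟨hx', hy', ?_⟩, ?_⟩, rfl⟩
    · exact ne_of_apply_ne _ hne
    · exact (val_sub_le_val_sub_orderEmbedding φ x' y').trans hle
  exact (card_le_card hsub).trans card_image_le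

lemma exists_map_orderEmbedding_compl_eq (S : Finset (Fin n)) {k : ℕ} (hk : k ≤ #S) :
    ∃ (φ : Fin (#Sᶜ + k) ↪o Fin n) (C : Finset (Fin (#Sᶜ + k))),
      C.map φ.toEmbedding = Sᶜ := by
  obtain ⟨T, hTS, hTk⟩ := exists_subset_card_eq hk
  have hcard : #(Sᶜ ∪ T) = #Sᶜ + k := by
    rw [card_union_of_disjoint (disjoint_compl_left.mono_right hTS), hTk]
  let φ := (Sᶜ ∪ T).orderEmbOfFin hcard
  have hsub : Sᶜ ⊆ univ.map φ.toEmbedding := by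
    rw [map_orderEmbOfFin_univ]
    exact subset_union_left
  obtain ⟨C, -, hC⟩ := subset_map_iff.mp hsub
  exact ⟨φ, C, hC.symm⟩

lemma card_closePairs_add_sum_min_le_of_le {k : ℕ} {S : Finset (Fin n)} (hkq : k ≤ q)
    (hkS : k ≤ #S) (hn : 2 * q < #Sᶜ + k) :
    #(closePairs q S) + ∑ p ∈ Icc 1 q, min p k ≤ q * #S := by
  obtain ⟨φ, C, hC⟩ := exists_map_orderEmbedding_compl_eq S hkS
  have card_C : #C = #Sᶜ := (card_map _).symm.trans (congrArg card hC)
  have card_Cc : #Cᶜ = k := by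
    rw [card_compl, Fintype.card_fin]
    lia
  have card_S : #S + #Sᶜ = n := by simp
  have compl_S := card_closePairs_add_mul_card_compl (q := q) (by lia) S
  have compl_C := card_closePairs_add_mul_card_compl (q := q) (by lia) C
  have contract : #(closePairs q Sᶜ) ≤ #(closePairs q C) :=
    (congrArg (fun s ↦ #(closePairs q s)) hC).symm.trans_le (card_closePairs_map_le φ C)
  have small : #(closePairs q Cᶜ) ≤ (#Cᶜ).choose 2 := card_closePairs_le_choose_two hn Cᶜ
  have sum_min := sum_min_add_choose_two hkq
  rw [card_C, card_Cc] at compl_C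
  rw [card_Cc] at small
  lia

lemma card_closePairs_add_sum_min_le (hn : 2 * q < n) (S : Finset (Fin n)) :
    #(closePairs q S) + ∑ p ∈ Icc 1 q, min p (min #S #Sᶜ) ≤ q * #S := by
  wlog hS : #S ≤ #Sᶜ generalizing S
  · have := this Sᶜ (by rw [compl_compl]; lia)
    rw [compl_compl, min_comm #Sᶜ] at this
    have := card_closePairs_add_mul_card_compl (q := q) (by lia) S
    lia
  have card_S : #S + #Sᶜ = n := by simp
  have hmin : ∑ p ∈ Icc 1 q, min p (min #S #Sᶜ) = ∑ p ∈ Icc 1 q, min p (min q #S) :=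
    sum_congr rfl fun p hp ↦ by grind
  rw [hmin]
  exact card_closePairs_add_sum_min_le_of_le (min_le_left ..) (min_le_right ..) (by lia)

lemma card_filter_finShift_notMem_Icc_le {p : ℕ} (hp : p < n) (a b : Fin n) :
    #{x ∈ Icc a b | finShift x p ∉ Icc a b} ≤ p := by
  have hmaps : ∀ x ∈ ({x ∈ Icc a b | finShift x p ∉ Icc a b} : Finset (Fin n)),
      (x : ℕ) ∈ Ico (b + 1 - p : ℕ) (b + 1) := by
    intro x hx
    simp only [mem_filter, mem_Icc, Fin.le_def, val_finShift hp] at hx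
    grind
  have := card_le_card_of_injOn Fin.val hmaps Fin.val_injective.injOn
  rw [Nat.card_Ico] at this
  lia

lemma mul_card_Icc_le (hq : q < n) (a b : Fin n) :
    q * #(Icc a b) ≤ #(closePairs q (Icc a b)) +
      ∑ p ∈ Icc 1 q, min p (min #(Icc a b) #(Icc a b)ᶜ) := by
  set A := Icc a b
  have per_shift : ∀ p ∈ Icc 1 q, #A ≤ #{x ∈ A | finShift x p ∈ A} + min p (min #A #Aᶜ) := by
    intro p hp
    have hpn : p < n := (mem_Icc.mp hp).2.trans_lt hq
    have hsplit := card_filter_add_card_filter_not (s := A) (finShift · p ∈ A)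
    have le_p : #{x ∈ A | finShift x p ∉ A} ≤ p := card_filter_finShift_notMem_Icc_le hpn a b
    have le_compl : #{x ∈ A | finShift x p ∉ A} ≤ #Aᶜ :=
      card_le_card_of_injOn (finShift · p) (by intro x; simp) (finShift_bijective p).1.injOn
    lia
  simpa [sum_add_distrib, ← card_closePairs hq] using sum_le_sum per_shift

theorem card_closePairs_le_of_card_eq_card_Icc (hn : 2 * q < n) {a b : Fin n}
    {S : Finset (Fin n)} (hS : #S = #(Icc a b)) :
    #(closePairs q S) ≤ #(closePairs q (Icc a b)) := by
  have upper := card_closePairs_add_sum_min_le hn S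
  have lower := mul_card_Icc_le (q := q) (by lia) a b
  rw [card_compl, ← hS, ← card_compl] at lower
  lia

end Isoperimetry

section Kalmanson

variable {n : ℕ}

lemma sum_Ioc_sub_sub_one {M : Type*} [AddCommGroup M] (f : Fin (n + 1) → M) (u : Fin (n + 1)) :
    ∑ a ∈ Ioc 0 u, (f a - f (a - 1)) = f u - f 0 := by
  induction u using Fin.induction with
  | zero => simp
  | succ i ih =>
    have hIoc : Ioc 0 i.succ = insert i.succ (Ioc 0 i.castSucc) := by
      grind
    have hpred : i.succ - 1 = i.castSucc := by
      rw [sub_eq_iff_eq_add, Fin.coeSucc_eq_succ]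
    rw [hIoc, sum_insert (by simp), ih, hpred, sub_add_sub_cancel]

lemma sum_Ici_sub_add_one {M : Type*} [AddCommGroup M] (f : Fin (n + 1) → M) (v : Fin (n + 1)) :
    ∑ b ∈ Ici v, (f b - f (b + 1)) = f v - f 0 := by
  induction v using Fin.reverseInduction with
  | last => rw [← Fin.top_eq_last, Ici_top, sum_singleton, Fin.top_eq_last, Fin.last_add_one]
  | cast i ih =>
    have hIci : Ici i.castSucc = insert i.castSucc (Ici i.succ) := by
      grind
    rw [hIci, sum_insert (by simp), ih]
    simp

/-- The cyclic mixed second difference of `D` at `(a, b)`. It is the coefficient of the interval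
`[a, b]` when `D` is written as vertex weights plus a combination of intervals; indices wrap
around, so the vertex `0` also plays the role of `n + 1`. -/
def mixedDiff {M : Type*} [AddCommGroup M] (D : Fin (n + 1) → Fin (n + 1) → M)
    (a b : Fin (n + 1)) : M :=
  D a b - D (a - 1) b - (D a (b + 1) - D (a - 1) (b + 1))

lemma sum_sum_mixedDiff {M : Type*} [AddCommGroup M] (D : Fin (n + 1) → Fin (n + 1) → M)
    (u v : Fin (n + 1)) :
    ∑ a ∈ Ioc 0 u, ∑ b ∈ Ici v, mixedDiff D a b = D u v - D u 0 - (D 0 v - D 0 0) := by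
  have inner (a : Fin (n + 1)) : ∑ b ∈ Ici v, mixedDiff D a b
      = (D a v - D a 0) - (D (a - 1) v - D (a - 1) 0) := by
    rw [sub_sub_sub_comm, ← sum_Ici_sub_add_one fun b ↦ D a b - D (a - 1) b]
    rfl
  simp only [inner, sum_Ioc_sub_sub_one fun a ↦ D a v - D a 0]

variable {D : Fin (n + 1) → Fin (n + 1) → ℝ}

lemma KalmansonMat.mixedDiff_nonpos (hK : KalmansonMat D) (hsymm : ∀ i j, D i j = D j i)
    (hlast : mixedDiff D 1 (Fin.last n) ≤ 0) {a b : Fin (n + 1)} (ha : 0 < a) (hab : a < b) :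
    mixedDiff D a b ≤ 0 := by
  have ha' : a - 1 < a := Fin.sub_one_lt_iff.mpr ha
  obtain hb | rfl := (Fin.le_last b).lt_or_eq
  · have := (hK (a - 1) a b (b + 1) ha' hab (Fin.lt_add_one_iff.mpr hb)).2
    unfold mixedDiff
    linarith
  obtain rfl | ha1 := eq_or_ne a 1
  · exact hlast
  have hpred : 0 < a - 1 := Fin.pos_iff_ne_zero.mpr (sub_ne_zero.mpr ha1)
  have := (hK 0 (a - 1) a _ hpred ha' hab).1
  rw [mixedDiff, Fin.last_add_one, hsymm a 0, hsymm (a - 1) 0]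
  linarith

lemma KalmansonMat.exists_eq_off_diag_mixedDiff_nonpos (hn : 2 ≤ n) (hK : KalmansonMat D)
    (hsymm : ∀ i j, D i j = D j i) :
    ∃ D' : Fin (n + 1) → Fin (n + 1) → ℝ, (∀ i j, i ≠ j → D' i j = D i j) ∧
      (∀ i j, D' i j = D' j i) ∧ ∀ a b, 0 < a → a < b → mixedDiff D' a b ≤ 0 := by
  -- `mixedDiff D 1 (Fin.last n)` is the only relevant one involving a diagonal entry, `D 0 0`;
  -- this value of the diagonal makes it vanish.
  let c := D 0 (Fin.last n) + D 1 0 - D 1 (Fin.last n)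
  let D' : Fin (n + 1) → Fin (n + 1) → ℝ := fun i j ↦ if i = j then c else D i j
  have off_diag : ∀ i j, i ≠ j → D' i j = D i j := fun i j h ↦ if_neg h
  have symm : ∀ i j, D' i j = D' j i := fun i j ↦ by
    simp only [D', hsymm i j, eq_comm]
  have kalmanson : KalmansonMat D' := fun i j k l hij hjk hkl ↦ by
    rw [off_diag i j hij.ne, off_diag k l hkl.ne, off_diag i k (hij.trans hjk).ne,
      off_diag j l (hjk.trans hkl).ne, off_diag i l (hij.trans (hjk.trans hkl)).ne,
      off_diag j k hjk.ne]
    exact hK i j k l hij hjk hkl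
  have last : mixedDiff D' 1 (Fin.last n) = 0 := by
    have zero_lt_one : (0 : Fin (n + 1)) < 1 :=
      Fin.pos_iff_ne_zero.mpr (Fin.one_eq_zero_iff.not.mpr (by lia))
    have one_lt_last : (1 : Fin (n + 1)) < Fin.last n := by
      rw [Fin.lt_def, Fin.val_one', Nat.mod_eq_of_lt (by lia)]
      exact hn
    rw [mixedDiff, sub_self, Fin.last_add_one, off_diag _ _ one_lt_last.ne,
      off_diag _ _ (zero_lt_one.trans one_lt_last).ne, off_diag _ _ zero_lt_one.ne',
      show D' 0 0 = c from if_pos rfl]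
    ring
  exact ⟨D', off_diag, symm, fun a b ha hab ↦ kalmanson.mixedDiff_nonpos symm last.le ha hab⟩

lemma eq_add_add_sum_mixedDiff (hsymm : ∀ i j, D i j = D j i) (u v : Fin (n + 1)) :
    D u v = (D 0 u - D 0 0 / 2) + (D 0 v - D 0 0 / 2) +
      ∑ a ∈ Ioc 0 u, ∑ b ∈ Ici v, mixedDiff D a b := by
  rw [sum_sum_mixedDiff, hsymm u 0]
  ring

lemma sum_Ioc_sum_Ici_eq_sum_ite {M : Type*} [AddCommMonoid M] (f : Fin (n + 1) → Fin (n + 1) → M)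
    {u v : Fin (n + 1)} (huv : u < v) :
    ∑ a ∈ Ioc 0 u, ∑ b ∈ Ici v, f a b =
      ∑ z : Fin (n + 1) × Fin (n + 1), if u ∈ Icc z.1 z.2 ∧ v ∈ Icc z.1 z.2 then
        if 0 < z.1 ∧ z.1 < z.2 then f z.1 z.2 else 0 else 0 := by
  rw [← sum_product', ← univ_inter (Ioc 0 u ×ˢ Ici v), ← sum_ite_mem]
  refine sum_congr rfl fun z _ ↦ ?_
  rw [← ite_and]
  refine if_congr ?_ rfl rfl
  simp only [mem_product, mem_Ioc, mem_Ici, mem_Icc]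
  grind

theorem KalmansonMat.exists_eq_add_sum_Icc (hn : 2 ≤ n) (hK : KalmansonMat D)
    (hsymm : ∀ i j, D i j = D j i) :
    ∃ (α : Fin (n + 1) → ℝ) (w : Fin (n + 1) × Fin (n + 1) → ℝ), (∀ z, w z ≤ 0) ∧
      ∀ u v, u ≠ v → D u v =
        α u + α v + ∑ z, if u ∈ Icc z.1 z.2 ∧ v ∈ Icc z.1 z.2 then w z else 0 := by
  obtain ⟨D', off_diag, symm, nonpos⟩ := hK.exists_eq_off_diag_mixedDiff_nonpos hn hsymm
  refine ⟨fun u ↦ D' 0 u - D' 0 0 / 2,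
    fun z ↦ if 0 < z.1 ∧ z.1 < z.2 then mixedDiff D' z.1 z.2 else 0, fun z ↦ ?_, ?_⟩
  · dsimp only
    split_ifs with hz
    exacts [nonpos _ _ hz.1 hz.2, le_rfl]
  · intro u v huv
    wlog h : u < v generalizing u v
    · rw [hsymm, this v u huv.symm (huv.lt_or_gt.resolve_left h)]
      simp only [and_comm, add_comm]
    rw [← off_diag u v huv, eq_add_add_sum_mixedDiff symm, sum_Ioc_sum_Ici_eq_sum_ite _ h]

end Kalmanson

lemma stripeObj_eq_sum_closePairs {n q : ℕ} (hq : q < n) (D : Fin n → Fin n → ℝ)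
    (π : Equiv.Perm (Fin n)) :
    stripeObj q D π = ∑ z ∈ closePairs q univ, D (π z.1) (π z.2) :=
  (sum_closePairs_univ hq fun x y ↦ D (π x) (π y)).symm

lemma sum_closePairs_univ_add {R : Type*} [CommSemiring R] {n q : ℕ} (hq : q < n)
    (f : Fin n → R) :
    ∑ z ∈ closePairs q univ, (f z.1 + f z.2) = 2 * q * ∑ x, f x := by
  rw [sum_closePairs_univ hq fun x y ↦ f x + f y]
  have per_shift : ∀ p ∈ Icc 1 q, ∑ x, (f x + f (finShift x p)) = 2 * ∑ x, f x := fun p _ ↦ by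
    rw [sum_add_distrib, two_mul, (finShift_bijective p).sum_comp f]
  rw [sum_congr rfl per_shift, sum_const, Nat.card_Icc, nsmul_eq_mul, add_tsub_cancel_right]
  ring

lemma stripeObj_eq_add_sum_card_closePairs {ι : Type*} [Fintype ι] {n q : ℕ} (hq : q < n)
    {D : Fin n → Fin n → ℝ} {α : Fin n → ℝ} {w : ι → ℝ} {A : ι → Finset (Fin n)}
    (hD : ∀ u v, u ≠ v → D u v = α u + α v + ∑ i, if u ∈ A i ∧ v ∈ A i then w i else 0)
    (π : Equiv.Perm (Fin n)) :
    stripeObj q D π = 2 * q * ∑ u, α u +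
      ∑ i, w i * #(closePairs q ((A i).map π.symm.toEmbedding)) := by
  have expand : ∀ z ∈ closePairs q univ, D (π z.1) (π z.2) = (α (π z.1) + α (π z.2)) +
      ∑ i, if π z.1 ∈ A i ∧ π z.2 ∈ A i then w i else 0 := fun z hz ↦
    hD _ _ (π.injective.ne (mem_closePairs.mp hz).1.2.2)
  rw [stripeObj_eq_sum_closePairs hq, sum_congr rfl expand, sum_add_distrib,
    sum_closePairs_univ_add hq fun x ↦ α (π x), Equiv.sum_comp π α, sum_comm]
  congr 1
  refine sum_congr rfl fun i _ ↦ ?_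
  rw [← sum_filter, sum_const, nsmul_eq_mul, mul_comm, closePairs_eq_filter_univ (map _ _)]
  simp only [mem_map_equiv, Equiv.symm_symm]

/-- Theorem (Deineko & Woeginger): for `q ≥ 1` and a symmetric `n×n` Kalmanson matrix
with `n ≥ 2q+1`, the identity permutation minimizes the `q`-stripe TSP objective. -/
theorem qStripe_kalmanson_identity_optimal (q n : ℕ) (hq : 1 ≤ q) (hn : 2*q+1 ≤ n)
    (D : Fin n → Fin n → ℝ) (hsymm : ∀ i j, D i j = D j i) (hK : KalmansonMat D)
    (π : Equiv.Perm (Fin n)) :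
    stripeObj q D (Equiv.refl (Fin n)) ≤ stripeObj q D π := by
  obtain ⟨m, rfl⟩ : ∃ m, n = m + 1 := Nat.exists_eq_add_one.mpr (by lia)
  obtain ⟨α, w, hw, hD⟩ := hK.exists_eq_add_sum_Icc (by lia) hsymm
  rw [stripeObj_eq_add_sum_card_closePairs (by lia) hD,
    stripeObj_eq_add_sum_card_closePairs (by lia) hD]
  refine add_le_add_right (sum_le_sum fun z _ ↦ mul_le_mul_of_nonpos_left ?_ (hw z)) _
  rw [Equiv.refl_symm, Equiv.refl_toEmbedding, map_refl, Nat.cast_le]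
  exact card_closePairs_le_of_card_eq_card_Icc (by lia) (card_map _)
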